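/- arXiv:1611.08472 — 3 statements merged into one kernel-verified Lean document; each statement's English description precedes it below -/
import Mathlib

section
/- Let U ⊆ E × F be open and convex, let g : E × F → G be C² on U, and let p = (x₀, y₀) ∈ U with s₀ = g(x₀, y₀). Let J_y : F →L[ℝ] G be the partial Jacobian of g at p with respect to the second variable. Then for every M ≥ 0 there exist constants C > 0 and δ > 0 such that for every (x, y) ∈ U with ‖(x, y) − (x₀, y₀)‖ ≤ δ and ‖x − x₀‖ ≤ M · ‖y − y₀‖², one has ‖outer(g(x, y) − s₀) − J_y ∘ outer(y − y₀) ∘ J_y^*‖ ≤ C · ‖y − y₀‖³ (operator norm). -/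
/-!
Write `t = ‖y - y₀‖`. Since `g` is `C²`, its derivative is Lipschitz near `p = (x₀, y₀)`, so the
mean value inequality bounds the first-order Taylor remainder at `q` by `K ‖q - p‖²`
(`exists_taylor_remainder_le`). In the region `‖x - x₀‖ ≤ M t²`, `t ≤ 1`, both this remainder and
the contribution of the `x`-derivative are `O(t²)`, hence `g (x, y) - s₀ = J_y (y - y₀) + O(t²)`
with `J_y (y - y₀) = O(t)`. As `outer` is quadratic (`norm_outer_sub_outer_le`), the
outer products differ by `O(t² · t)`, and `outer (J_y v) = J_y ∘ outer v ∘ J_y^*`.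
-/

/-- The rank-one outer product operator `v vᵀ : w ↦ ⟪v, w⟫ • v`. -/
noncomputable def outer {G : Type*} [NormedAddCommGroup G] [InnerProductSpace ℝ G]
    (v : G) : G →L[ℝ] G :=
  (innerSL ℝ v).smulRight v

lemma outer_map {F G : Type*}
    [NormedAddCommGroup F] [InnerProductSpace ℝ F] [FiniteDimensional ℝ F]
    [NormedAddCommGroup G] [InnerProductSpace ℝ G] [FiniteDimensional ℝ G]
    (J : F →L[ℝ] G) (v : F) :
    J ∘L (outer v) ∘L (ContinuousLinearMap.adjoint J) = outer (J v) := by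
  ext w
  simp [outer, ContinuousLinearMap.adjoint_inner_right]

lemma norm_outer_sub_outer_le {G : Type*} [NormedAddCommGroup G] [InnerProductSpace ℝ G]
    (u v : G) : ‖outer u - outer v‖ ≤ ‖u - v‖ * (‖u‖ + ‖v‖) := by
  refine ContinuousLinearMap.opNorm_le_bound _ (by positivity) fun w => ?_
  have h : (outer u - outer v) w = inner ℝ (u - v) w • u + inner ℝ v w • (u - v) := by
    simp only [outer, sub_apply, ContinuousLinearMap.smulRight_apply, innerSL_apply_apply,
      inner_sub_left]
    module
  rw [h]
  calc _ ≤ ‖inner ℝ (u - v) w • u‖ + ‖inner ℝ v w • (u - v)‖ := norm_add_le _ _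
    _ ≤ (‖u - v‖ * ‖w‖) * ‖u‖ + (‖v‖ * ‖w‖) * ‖u - v‖ := by
        rw [norm_smul, norm_smul]
        gcongr <;> exact norm_inner_le_norm _ _
    _ = _ := by ring

lemma exists_taylor_remainder_le {V G : Type*} [NormedAddCommGroup V] [NormedSpace ℝ V]
    [NormedAddCommGroup G] [NormedSpace ℝ G] {g : V → G} {p : V} (hg : ContDiffAt ℝ 2 g p) :
    ∃ K : ℝ, 0 ≤ K ∧ ∃ r > 0, ∀ q, ‖q - p‖ < r →
      ‖g q - g p - fderiv ℝ g p (q - p)‖ ≤ K * ‖q - p‖ ^ 2 := by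
  have h1 : ContDiffAt ℝ 1 (fderiv ℝ g) p := hg.fderiv_right (by norm_num)
  obtain ⟨K, s, hs, hK⟩ := h1.exists_lipschitzOnWith
  have hd : ∀ᶠ z in nhds p, DifferentiableAt ℝ g z :=
    (hg.eventually (by simp)).mono fun z hz => hz.differentiableAt (by simp)
  obtain ⟨r, hr, hball⟩ := Metric.mem_nhds_iff.1 (Filter.inter_mem hs hd)
  refine ⟨K, K.2, r, hr, fun q hq => ?_⟩
  -- On the closed ball of radius `‖q - p‖`, the derivative moves by at most `K ‖q - p‖`.
  have hsub : ∀ z ∈ Metric.closedBall p ‖q - p‖, z ∈ s ∧ DifferentiableAt ℝ g z := fun z hz =>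
    hball (Metric.closedBall_subset_ball hq hz)
  have key := Convex.norm_image_sub_le_of_norm_fderiv_le' (𝕜 := ℝ) (f := g)
    (φ := fderiv ℝ g p) (C := K * ‖q - p‖) (s := Metric.closedBall p ‖q - p‖)
    (x := p) (y := q) (fun z hz => (hsub z hz).2)
    (fun z hz => by
      refine (hK.norm_sub_le (hsub z hz).1 (mem_of_mem_nhds hs)).trans ?_
      gcongr
      simpa [dist_eq_norm] using hz)
    (convex_closedBall _ _) (by simp) (by simp [dist_eq_norm])
  linarith [key]

/-- Per-sample bound underlying equation (17): the outer product of the observed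
difference `g(x,y) − s₀` equals the conjugation by `J_y` of the outer product of
`y − y₀`, up to a cubic error, under Assumption 1. -/
theorem stmt_1
    {E F G : Type*}
    [NormedAddCommGroup E] [InnerProductSpace ℝ E] [FiniteDimensional ℝ E]
    [NormedAddCommGroup F] [InnerProductSpace ℝ F] [FiniteDimensional ℝ F]
    [NormedAddCommGroup G] [InnerProductSpace ℝ G] [FiniteDimensional ℝ G]
    (U : Set (E × F)) (hUopen : IsOpen U) (hUconv : Convex ℝ U)
    (g : E × F → G) (hg : ContDiffOn ℝ 2 g U)
    (x₀ : E) (y₀ : F) (hp : (x₀, y₀) ∈ U)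
    (s₀ : G) (hs₀ : s₀ = g (x₀, y₀))
    (Jy : F →L[ℝ] G)
    (hJy : Jy = (fderiv ℝ g (x₀, y₀)).comp (ContinuousLinearMap.inr ℝ E F))
    (M : ℝ) (hM : 0 ≤ M) :
    ∃ C > 0, ∃ δ > 0, ∀ x : E, ∀ y : F, (x, y) ∈ U →
      ‖((x, y) : E × F) - (x₀, y₀)‖ ≤ δ →
      ‖x - x₀‖ ≤ M * ‖y - y₀‖ ^ 2 →
      ‖outer (g (x, y) - s₀) -
          Jy ∘L (outer (y - y₀)) ∘L (ContinuousLinearMap.adjoint Jy)‖ ≤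
        C * ‖y - y₀‖ ^ 3 := by
  subst hs₀
  obtain ⟨K, hK, r, hr, hrem⟩ :=
    exists_taylor_remainder_le (hg.contDiffAt (hUopen.mem_nhds hp))
  set D := fderiv ℝ g (x₀, y₀) with hD
  -- `A t²` bounds the deviation of `g (x, y) - g (x₀, y₀)` from `Jy (y - y₀)`.
  set A := K * (M + 1) ^ 2 + ‖D‖ * M with hA
  have hA0 : 0 ≤ A := by positivity
  refine ⟨A * (A + 2 * ‖Jy‖) + 1, by positivity, min (r / 2) 1, by positivity, ?_⟩
  intro x y _ hδ hx
  rw [outer_map]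
  have hqr : ‖((x, y) : E × F) - (x₀, y₀)‖ < r := by
    linarith [hδ.trans (min_le_left _ _)]
  have hq1 : ‖((x, y) : E × F) - (x₀, y₀)‖ ≤ 1 := hδ.trans (min_le_right _ _)
  have hR := hrem (x, y) hqr
  rw [Prod.mk_sub_mk] at hR hq1
  have ht1 : ‖y - y₀‖ ≤ 1 := (norm_snd_le (x - x₀, y - y₀)).trans hq1
  set t := ‖y - y₀‖ with ht
  have ht0 : 0 ≤ t := norm_nonneg _
  have htt : t ^ 2 ≤ t := by nlinarith
  have hq : ‖(x - x₀, y - y₀)‖ ≤ (M + 1) * t := by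
    rw [Prod.norm_mk]
    refine max_le ?_ ?_
    · nlinarith
    · rw [← ht]; nlinarith
  have hsplit : D (x - x₀, y - y₀) = D (x - x₀, 0) + Jy (y - y₀) := by
    rw [hJy, ContinuousLinearMap.comp_apply, ContinuousLinearMap.inr_apply, ← map_add]
    simp
  have hDx : ‖D (x - x₀, 0)‖ ≤ ‖D‖ * (M * t ^ 2) := by
    refine (D.le_opNorm _).trans ?_
    gcongr
    simpa [Prod.norm_mk] using hx
  have he : ‖g (x, y) - g (x₀, y₀) - Jy (y - y₀)‖ ≤ A * t ^ 2 := by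
    calc _ = ‖(g (x, y) - g (x₀, y₀) - D (x - x₀, y - y₀)) + D (x - x₀, 0)‖ := by
          rw [hsplit]; congr 1; abel
      _ ≤ K * ((M + 1) * t) ^ 2 + ‖D‖ * (M * t ^ 2) := by
          refine (norm_add_le _ _).trans (add_le_add (hR.trans ?_) hDx)
          gcongr
      _ = A * t ^ 2 := by rw [hA]; ring
  have hv : ‖Jy (y - y₀)‖ ≤ ‖Jy‖ * t := Jy.le_opNorm _
  have hu : ‖g (x, y) - g (x₀, y₀)‖ ≤ A * t + ‖Jy‖ * t := by
    have h := norm_add_le (g (x, y) - g (x₀, y₀) - Jy (y - y₀)) (Jy (y - y₀))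
    rw [sub_add_cancel] at h
    nlinarith
  calc _ ≤ _ := norm_outer_sub_outer_le _ _
    _ ≤ (A * t ^ 2) * ((A * t + ‖Jy‖ * t) + ‖Jy‖ * t) := by gcongr
    _ = (A * (A + 2 * ‖Jy‖)) * t ^ 3 := by ring
    _ ≤ (A * (A + 2 * ‖Jy‖) + 1) * t ^ 3 := by gcongr; linarith
end

section
/- Let V ⊆ G be open, let h : G → E × F be C² on V, and let K ⊆ V be a compact convex set. For s ∈ V let Q(s) : G →L[ℝ] F denote the second (F-)component of the Fréchet derivative of h at s, i.e., Q(s) = snd ∘ (fderiv ℝ h s). Then there exists a constant C > 0 such that for all s₀, s₁ ∈ K, |‖(h s₁).2 − (h s₀).2‖² − (1/2) · ⟪s₁ − s₀, (Q(s₀)^* ∘ Q(s₀) + Q(s₁)^* ∘ Q(s₁))(s₁ − s₀)⟫| ≤ C · ‖s₁ − s₀‖³. -/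
/-!
Write `f = snd ∘ h`, so that `Q = fderiv ℝ f` on `V`, and `δ = s₁ - s₀`, `Δ = f s₁ - f s₀`.
By compactness `‖Q‖ ≤ L` and `‖fderiv ℝ (fderiv ℝ f)‖ ≤ M` on `K`, and convexity of `K` turns
these bounds, through the mean value inequality, into `‖Δ‖ ≤ L ‖δ‖`, `M`-Lipschitz continuity of
`Q` on `K` and, for either endpoint `s`, `‖Δ - Q s δ‖ ≤ M ‖δ‖ ^ 2`. Hence
`|‖Δ‖ ^ 2 - ‖Q s δ‖ ^ 2| ≤ ‖Δ - Q s δ‖ (‖Δ‖ + ‖Q s δ‖) ≤ 2 M L ‖δ‖ ^ 3`, and the average of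
the estimates at `s₀` and `s₁` is the claim, since `⟪δ, (Q s)† (Q s δ)⟫ = ‖Q s δ‖ ^ 2`.
-/

open scoped RealInnerProductSpace

/-- First-order Taylor expansion at an endpoint `s` of a segment in `K`, with a quadratic error
controlled by the Lipschitz constant of the derivative. -/
lemma norm_sub_fderiv_le_of_lipschitz
    {F G : Type*} [NormedAddCommGroup F] [NormedSpace ℝ F]
    [NormedAddCommGroup G] [NormedSpace ℝ G]
    {f : G → F} {K : Set G} {M : ℝ} (hM : 0 ≤ M) (hK : Convex ℝ K)
    (hf : ∀ x ∈ K, DifferentiableAt ℝ f x)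
    (hL : ∀ x ∈ K, ∀ y ∈ K, ‖fderiv ℝ f y - fderiv ℝ f x‖ ≤ M * ‖y - x‖)
    {s₀ s₁ s : G} (h₀ : s₀ ∈ K) (h₁ : s₁ ∈ K) (hs : s = s₀ ∨ s = s₁) :
    ‖f s₁ - f s₀ - fderiv ℝ f s (s₁ - s₀)‖ ≤ M * ‖s₁ - s₀‖ ^ 2 := by
  have hseg : segment ℝ s₀ s₁ ⊆ K := hK.segment_subset h₀ h₁
  have hsK : s ∈ K := by rcases hs with rfl | rfl <;> assumption
  have hdist : ∀ x ∈ segment ℝ s₀ s₁, ‖x - s‖ ≤ ‖s₁ - s₀‖ := by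
    intro x hx
    rcases hs with rfl | rfl
    · exact norm_sub_le_of_mem_segment hx
    · rw [norm_sub_rev s s₀]
      exact norm_sub_le_of_mem_segment (segment_symm ℝ s₀ s ▸ hx)
  have := (convex_segment s₀ s₁).norm_image_sub_le_of_norm_fderiv_le'
    (𝕜 := ℝ) (f := f) (φ := fderiv ℝ f s) (C := M * ‖s₁ - s₀‖)
    (fun x hx => hf x (hseg hx))
    (fun x hx => (hL s hsK x (hseg hx)).trans
      (mul_le_mul_of_nonneg_left (hdist x hx) hM))
    (left_mem_segment ℝ s₀ s₁) (right_mem_segment ℝ s₀ s₁)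
  calc _ ≤ _ := this
    _ = _ := by ring

lemma abs_norm_sq_sub_norm_sq_le {F : Type*} [NormedAddCommGroup F] (a b : F) :
    |‖a‖ ^ 2 - ‖b‖ ^ 2| ≤ ‖a - b‖ * (‖a‖ + ‖b‖) := by
  rw [sq_sub_sq, abs_mul, abs_of_nonneg (by positivity), mul_comm]
  exact mul_le_mul_of_nonneg_right (abs_norm_sub_norm_le a b) (by positivity)

/-- Symmetrized Theorem 2 (equation (22)): averaging the Taylor expansions of
the local inverse `h = g⁻¹` around both samples yields the symmetric modified
Mahalanobis distance, with a uniform cubic error on a compact convex set. -/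
theorem stmt_7
    {E F G : Type*}
    [NormedAddCommGroup E] [InnerProductSpace ℝ E] [FiniteDimensional ℝ E]
    [NormedAddCommGroup F] [InnerProductSpace ℝ F] [FiniteDimensional ℝ F]
    [NormedAddCommGroup G] [InnerProductSpace ℝ G] [FiniteDimensional ℝ G]
    (V : Set G) (hVopen : IsOpen V)
    (h : G → E × F) (hh : ContDiffOn ℝ 2 h V)
    (K : Set G) (hK : IsCompact K) (hKconv : Convex ℝ K) (hKV : K ⊆ V)
    (Q : G → (G →L[ℝ] F))
    (hQ : ∀ s ∈ V, Q s = (ContinuousLinearMap.snd ℝ E F).comp (fderiv ℝ h s)) :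
    ∃ C > 0, ∀ s₀ ∈ K, ∀ s₁ ∈ K,
      |‖(h s₁).2 - (h s₀).2‖ ^ 2 -
          (1 / 2) * ⟪s₁ - s₀,
            ((ContinuousLinearMap.adjoint (Q s₀)) ∘L (Q s₀) +
              (ContinuousLinearMap.adjoint (Q s₁)) ∘L (Q s₁)) (s₁ - s₀)⟫| ≤
        C * ‖s₁ - s₀‖ ^ 3 := by
  set f : G → F := fun s => (h s).2 with hf_def
  have hf : ContDiffOn ℝ 2 f V := contDiff_snd.comp_contDiffOn hh
  have hdiff : ∀ x ∈ K, DifferentiableAt ℝ f x := fun x hx =>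
    (hf.differentiableOn (by norm_num)).differentiableAt (hVopen.mem_nhds (hKV hx))
  have hQf : ∀ s ∈ K, Q s = fderiv ℝ f s := by
    intro s hs
    rw [hQ s (hKV hs)]
    have hd : DifferentiableAt ℝ h s :=
      (hh.differentiableOn (by norm_num)).differentiableAt (hVopen.mem_nhds (hKV hs))
    exact ((ContinuousLinearMap.snd ℝ E F).hasFDerivAt.comp s hd.hasFDerivAt).fderiv.symm
  have hf' : ContDiffOn ℝ 1 (fderiv ℝ f) V :=
    hf.fderiv_of_isOpen hVopen (by norm_num)
  have hf'' : ContinuousOn (fderiv ℝ (fderiv ℝ f)) V :=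
    hf'.continuousOn_fderiv_of_isOpen hVopen le_rfl
  obtain ⟨L, hL⟩ := hK.exists_bound_of_continuousOn (hf'.continuousOn.mono hKV)
  obtain ⟨M, hM⟩ := hK.exists_bound_of_continuousOn (E := G →L[ℝ] G →L[ℝ] F) (hf''.mono hKV)
  rcases K.eq_empty_or_nonempty with rfl | ⟨k, hk⟩
  · exact ⟨1, one_pos, by simp⟩
  have hL0 : 0 ≤ L := (norm_nonneg _).trans (hL k hk)
  have hM0 : 0 ≤ M := (norm_nonneg _).trans (hM k hk)
  have hLip : ∀ x ∈ K, ∀ y ∈ K, ‖fderiv ℝ f y - fderiv ℝ f x‖ ≤ M * ‖y - x‖ :=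
    fun x hx y hy => hKconv.norm_image_sub_le_of_norm_fderiv_le
      (fun z hz => (hf'.differentiableOn (by norm_num)).differentiableAt
        (hVopen.mem_nhds (hKV hz))) hM hx hy
  -- The summand `1` only serves to make the constant positive.
  refine ⟨2 * M * L + 1, by positivity, fun s₀ h₀ s₁ h₁ => ?_⟩
  have hΔ : ‖f s₁ - f s₀‖ ≤ L * ‖s₁ - s₀‖ :=
    hKconv.norm_image_sub_le_of_norm_fderiv_le hdiff hL h₀ h₁
  have key : ∀ s ∈ K, s = s₀ ∨ s = s₁ →
      |‖f s₁ - f s₀‖ ^ 2 - ‖Q s (s₁ - s₀)‖ ^ 2| ≤ 2 * M * L * ‖s₁ - s₀‖ ^ 3 := by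
    intro s hsK hs
    rw [hQf s hsK]
    calc _ ≤ _ := abs_norm_sq_sub_norm_sq_le _ _
      _ ≤ (M * ‖s₁ - s₀‖ ^ 2) * (L * ‖s₁ - s₀‖ + L * ‖s₁ - s₀‖) := by
        gcongr
        · exact norm_sub_fderiv_le_of_lipschitz hM0 hKconv hdiff hLip h₀ h₁ hs
        · exact ContinuousLinearMap.le_of_opNorm_le _ (hL s hsK) _
      _ = _ := by ring
  have hinner : ⟪s₁ - s₀,
      ((ContinuousLinearMap.adjoint (Q s₀)) ∘L (Q s₀) +
        (ContinuousLinearMap.adjoint (Q s₁)) ∘L (Q s₁)) (s₁ - s₀)⟫ =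
      ‖Q s₀ (s₁ - s₀)‖ ^ 2 + ‖Q s₁ (s₁ - s₀)‖ ^ 2 := by
    simp only [ContinuousLinearMap.add_apply, ContinuousLinearMap.comp_apply, inner_add_right,
      ContinuousLinearMap.adjoint_inner_right, real_inner_self_eq_norm_sq]
  have k₀ := abs_le.mp (key s₀ h₀ (Or.inl rfl))
  have k₁ := abs_le.mp (key s₁ h₁ (Or.inr rfl))
  have hpos : 0 ≤ ‖s₁ - s₀‖ ^ 3 := by positivity
  change |‖f s₁ - f s₀‖ ^ 2 - _| ≤ _
  rw [hinner, abs_le]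
  constructor <;> linarith [k₀.1, k₀.2, k₁.1, k₁.2]
end

section
/- Let V ⊆ G be open, let h : G → E × F be C³ on V, and let K ⊆ V be a compact convex set. For s ∈ V let Q(s) : G →L[ℝ] F denote the second (F-)component of the Fréchet derivative of h at s, i.e., Q(s) = snd ∘ (fderiv ℝ h s). Then there exists a constant C > 0 such that for all s₀, s₁ ∈ K, |‖(h s₁).2 − (h s₀).2‖² − (1/2) · ⟪s₁ − s₀, (Q(s₀)^* ∘ Q(s₀) + Q(s₁)^* ∘ Q(s₁))(s₁ − s₀)⟫| ≤ C · ‖s₁ − s₀‖⁴; that is, symmetrization over the two base points improves the error of the modified Mahalanobis approximation from third to fourth order. -/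
/-!
Write `f = snd ∘ h`, `v = s₁ - s₀`, `a = Df(s₀) v`, `b = Df(s₁) v`. The parallelogram identity
`(‖a‖² + ‖b‖²) / 2 = ‖(a + b) / 2‖² + ‖(a - b) / 2‖²` reduces the claim to two bounds:

* `b - a = O(‖v‖²)`, by the mean value inequality for `Df`, so its square is `O(‖v‖⁴)`;
* `f s₁ - f s₀ - (a + b) / 2 = O(‖v‖³)`, the error of the trapezoidal rule
  (`norm_trapezoid_le`), which is then multiplied by `f s₁ - f s₀ + (a + b) / 2 = O(‖v‖)`.

All constants come from a common bound on the first three derivatives of `f` over the compact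
set `K`; convexity keeps the segment from `s₀` to `s₁` inside `K`.
-/

open scoped RealInnerProductSpace

/-- Error of the trapezoidal rule on `[0, 1]`. With `S t = p1 t - p1 0 - t • p2 t`, the error
`R t = p t - p 0 - (t / 2) • (p1 0 + p1 t)` has derivative `S t / 2`, and `S` has derivative
`- t • p3 t`; the mean value inequality is applied to `S` and then to `R`. -/
lemma norm_trapezoid_le {F : Type*} [NormedAddCommGroup F] [NormedSpace ℝ F]
    {p p1 p2 p3 : ℝ → F} {M : ℝ}
    (h0 : ∀ t ∈ Set.Icc (0 : ℝ) 1, HasDerivAt p (p1 t) t)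
    (h1 : ∀ t ∈ Set.Icc (0 : ℝ) 1, HasDerivAt p1 (p2 t) t)
    (h2 : ∀ t ∈ Set.Icc (0 : ℝ) 1, HasDerivAt p2 (p3 t) t)
    (hM : ∀ t ∈ Set.Icc (0 : ℝ) 1, ‖p3 t‖ ≤ M) :
    ‖p 1 - p 0 - (1 / 2 : ℝ) • (p1 0 + p1 1)‖ ≤ M := by
  have hM0 : 0 ≤ M := (norm_nonneg _).trans (hM 0 (by simp))
  have hS : ∀ t ∈ Set.Icc (0 : ℝ) 1, ‖p1 t - p1 0 - t • p2 t‖ ≤ M := by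
    intro t ht
    have key := norm_image_sub_le_of_norm_deriv_le_segment'
      (f := fun t => p1 t - p1 0 - t • p2 t) (f' := fun t => -(t • p3 t)) (C := M)
      (a := 0) (b := 1) (fun x hx => by
        have := (((h1 x hx).sub_const (p1 0)).sub
          ((hasDerivAt_id x).smul (h2 x hx))).hasDerivWithinAt (s := Set.Icc 0 1)
        refine this.congr_deriv ?_
        simp only [id]
        module) (fun x hx => by
        rw [norm_neg, norm_smul, Real.norm_of_nonneg hx.1]
        have := hM x ⟨hx.1, hx.2.le⟩
        nlinarith [norm_nonneg (p3 x), hx.1, hx.2]) t ht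
    simp only [zero_smul, sub_self, sub_zero] at key
    exact key.trans (mul_le_of_le_one_right hM0 ht.2)
  have key := norm_image_sub_le_of_norm_deriv_le_segment'
    (f := fun t => p t - p 0 - (t / 2) • (p1 0 + p1 t))
    (f' := fun t => (1 / 2 : ℝ) • (p1 t - p1 0 - t • p2 t)) (C := M)
    (a := 0) (b := 1) (fun x hx => by
      have := (((h0 x hx).sub_const (p 0)).sub
        (((hasDerivAt_id x).div_const 2).smul
          ((h1 x hx).const_add (p1 0)))).hasDerivWithinAt (s := Set.Icc 0 1)
      refine this.congr_deriv ?_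
      simp only [id]
      module) (fun x hx => by
      rw [norm_smul, Real.norm_of_nonneg (by norm_num)]
      have := hS x ⟨hx.1, hx.2.le⟩
      linarith) 1 (by simp)
  simpa using key

/-- The purely Hilbert-space part of the estimate: `d` plays the increment of `f`, `a` and `b`
its linear approximations based at the two endpoints, and `n` the length of the step. -/
lemma abs_norm_sq_sub_le {F : Type*} [NormedAddCommGroup F] [InnerProductSpace ℝ F]
    {a b d : F} {M n : ℝ} (ha : ‖a‖ ≤ M * n) (hb : ‖b‖ ≤ M * n) (hd : ‖d‖ ≤ M * n)
    (hab : ‖b - a‖ ≤ M * n ^ 2) (hr : ‖d - (1 / 2 : ℝ) • (a + b)‖ ≤ M * n ^ 3) :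
    |‖d‖ ^ 2 - (1 / 2) * (‖a‖ ^ 2 + ‖b‖ ^ 2)| ≤ 3 * M ^ 2 * n ^ 4 := by
  have hid : ‖d‖ ^ 2 - (1 / 2) * (‖a‖ ^ 2 + ‖b‖ ^ 2) =
      ⟪d - (1 / 2 : ℝ) • (a + b), d + (1 / 2 : ℝ) • (a + b)⟫ - (1 / 4) * ‖b - a‖ ^ 2 := by
    simp only [← real_inner_self_eq_norm_sq, inner_sub_left, inner_sub_right, inner_add_left,
      inner_add_right, real_inner_smul_left, real_inner_smul_right, real_inner_comm a d,
      real_inner_comm b d, real_inner_comm a b]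
    ring
  have hm : ‖d + (1 / 2 : ℝ) • (a + b)‖ ≤ 2 * (M * n) := by
    have h1 := norm_add_le d ((1 / 2 : ℝ) • (a + b))
    rw [norm_smul, Real.norm_of_nonneg (by norm_num : (0 : ℝ) ≤ 1 / 2)] at h1
    have h2 := norm_add_le a b
    linarith
  have h1 := (abs_real_inner_le_norm (d - (1 / 2 : ℝ) • (a + b))
    (d + (1 / 2 : ℝ) • (a + b))).trans
    (mul_le_mul hr hm (norm_nonneg _) ((norm_nonneg _).trans hr))
  have h2 : ‖b - a‖ ^ 2 ≤ (M * n ^ 2) ^ 2 := pow_le_pow_left₀ (norm_nonneg _) hab 2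
  rw [hid, abs_le]
  have h3 := abs_le.1 h1
  have h4 : 0 ≤ M ^ 2 * n ^ 4 := by positivity
  constructor <;> nlinarith [sq_nonneg ‖b - a‖]

lemma hasDerivAt_comp_line {A B : Type*} [NormedAddCommGroup A] [NormedSpace ℝ A]
    [NormedAddCommGroup B] [NormedSpace ℝ B] {g : A → B} {g' : A →L[ℝ] B} {x v : A} {t : ℝ}
    (hg : HasFDerivAt g g' (x + t • v)) : HasDerivAt (fun t : ℝ => g (x + t • v)) (g' v) t := by
  have hline : HasDerivAt (fun t : ℝ => x + t • v) v t := by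
    simpa using ((hasDerivAt_id t).smul_const v).const_add x
  exact HasFDerivAt.comp_hasDerivAt (f := fun t : ℝ => x + t • v) t hg hline

lemma hasDerivAt_eval {A B : Type*} [NormedAddCommGroup A] [NormedSpace ℝ A]
    [NormedAddCommGroup B] [NormedSpace ℝ B] {c : ℝ → A →L[ℝ] B} {c' : A →L[ℝ] B} {t : ℝ}
    (hc : HasDerivAt c c' t) (v : A) : HasDerivAt (fun t => c t v) (c' v) t := by
  simpa using hc.clm_apply (hasDerivAt_const t v)

-- The normed structure on `G →L[ℝ] G →L[ℝ] G →L[ℝ] F` is only found by a deeper instance search.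
set_option maxHeartbeats 1000000 in
set_option maxSynthPendingDepth 3 in
/-- Improved bound after equation (22): for `h = g⁻¹` of class C³, the
symmetrization over the two base points cancels the third-order Hessian terms,
improving the error of the modified Mahalanobis approximation from third to
fourth order, uniformly on a compact convex set. -/
theorem stmt_8
    {E F G : Type*}
    [NormedAddCommGroup E] [InnerProductSpace ℝ E] [FiniteDimensional ℝ E]
    [NormedAddCommGroup F] [InnerProductSpace ℝ F] [FiniteDimensional ℝ F]
    [NormedAddCommGroup G] [InnerProductSpace ℝ G] [FiniteDimensional ℝ G]
    (V : Set G) (hVopen : IsOpen V)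
    (h : G → E × F) (hh : ContDiffOn ℝ 3 h V)
    (K : Set G) (hK : IsCompact K) (hKconv : Convex ℝ K) (hKV : K ⊆ V)
    (Q : G → (G →L[ℝ] F))
    (hQ : ∀ s ∈ V, Q s = (ContinuousLinearMap.snd ℝ E F).comp (fderiv ℝ h s)) :
    ∃ C > 0, ∀ s₀ ∈ K, ∀ s₁ ∈ K,
      |‖(h s₁).2 - (h s₀).2‖ ^ 2 -
          (1 / 2) * ⟪s₁ - s₀,
            ((ContinuousLinearMap.adjoint (Q s₀)) ∘L (Q s₀) +
              (ContinuousLinearMap.adjoint (Q s₁)) ∘L (Q s₁)) (s₁ - s₀)⟫| ≤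
        C * ‖s₁ - s₀‖ ^ 4 := by
  set f : G → F := fun s => (h s).2 with hf
  have hf3 : ContDiffOn ℝ 3 f V := hh.snd
  have hf2 : ContDiffOn ℝ 2 (fderiv ℝ f) V := hf3.fderiv_of_isOpen hVopen (by norm_num)
  have hf1 : ContDiffOn ℝ 1 (fderiv ℝ (fderiv ℝ f)) V :=
    hf2.fderiv_of_isOpen hVopen (by norm_num)
  have hf0 : ContDiffOn ℝ 0 (fderiv ℝ (fderiv ℝ (fderiv ℝ f))) V :=
    hf1.fderiv_of_isOpen hVopen (by norm_num)
  have d1 : ∀ s ∈ V, HasFDerivAt f (fderiv ℝ f s) s := fun s hs =>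
    ((hf3.differentiableOn (by norm_num)).differentiableAt (hVopen.mem_nhds hs)).hasFDerivAt
  have d2 : ∀ s ∈ V, HasFDerivAt (fderiv ℝ f) (fderiv ℝ (fderiv ℝ f) s) s := fun s hs =>
    ((hf2.differentiableOn (by norm_num)).differentiableAt (hVopen.mem_nhds hs)).hasFDerivAt
  have d3 : ∀ s ∈ V, HasFDerivAt (fderiv ℝ (fderiv ℝ f))
      (fderiv ℝ (fderiv ℝ (fderiv ℝ f)) s) s := fun s hs =>
    ((hf1.differentiableOn (by norm_num)).differentiableAt (hVopen.mem_nhds hs)).hasFDerivAt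
  have hQf : ∀ s ∈ V, Q s = fderiv ℝ f s := by
    intro s hs
    rw [hQ s hs]
    have hd : DifferentiableAt ℝ h s :=
      (hh.differentiableOn (by norm_num)).differentiableAt (hVopen.mem_nhds hs)
    exact ((hd.hasFDerivAt.snd).fderiv).symm
  obtain ⟨M1, hM1⟩ := hK.exists_bound_of_continuousOn (hf2.continuousOn.mono hKV)
  obtain ⟨M2, hM2⟩ := hK.exists_bound_of_continuousOn (hf1.continuousOn.mono hKV)
  obtain ⟨M3, hM3⟩ := hK.exists_bound_of_continuousOn (hf0.continuousOn.mono hKV)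
  obtain ⟨M, hMM1, hMM2, hMM3⟩ : ∃ M, M1 ≤ M ∧ M2 ≤ M ∧ M3 ≤ M :=
    ⟨max M1 (max M2 M3), by simp, by simp, by simp⟩
  -- The summand `1` only makes the constant strictly positive.
  refine ⟨3 * M ^ 2 + 1, by positivity, fun s₀ hs₀ s₁ hs₁ => ?_⟩
  set v := s₁ - s₀ with hv
  have hinner : ⟪v, ((ContinuousLinearMap.adjoint (Q s₀)) ∘L (Q s₀) +
      (ContinuousLinearMap.adjoint (Q s₁)) ∘L (Q s₁)) v⟫ =
      ‖fderiv ℝ f s₀ v‖ ^ 2 + ‖fderiv ℝ f s₁ v‖ ^ 2 := by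
    simp only [add_apply, ContinuousLinearMap.comp_apply, inner_add_right,
      ContinuousLinearMap.adjoint_inner_right, real_inner_self_eq_norm_sq,
      hQf s₀ (hKV hs₀), hQf s₁ (hKV hs₁)]
  have hDb : ∀ s ∈ K, ‖fderiv ℝ f s‖ ≤ M := fun s hs => (hM1 s hs).trans hMM1
  have ha : ∀ s ∈ K, ‖fderiv ℝ f s v‖ ≤ M * ‖v‖ := fun s hs =>
    (fderiv ℝ f s).le_of_opNorm_le (hDb s hs) v
  have hd : ‖f s₁ - f s₀‖ ≤ M * ‖v‖ :=
    hKconv.norm_image_sub_le_of_norm_hasFDerivWithin_le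
      (fun s hs => (d1 s (hKV hs)).hasFDerivWithinAt) hDb hs₀ hs₁
  have hab : ‖fderiv ℝ f s₁ v - fderiv ℝ f s₀ v‖ ≤ M * ‖v‖ ^ 2 := by
    have h1 : ‖fderiv ℝ f s₁ - fderiv ℝ f s₀‖ ≤ M * ‖v‖ :=
      hKconv.norm_image_sub_le_of_norm_hasFDerivWithin_le
        (fun s hs => (d2 s (hKV hs)).hasFDerivWithinAt)
        (fun s hs => (hM2 s hs).trans hMM2) hs₀ hs₁
    calc _ ≤ M * ‖v‖ * ‖v‖ := (fderiv ℝ f s₁ - fderiv ℝ f s₀).le_of_opNorm_le h1 v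
      _ = _ := by ring
  have hγ : ∀ t ∈ Set.Icc (0 : ℝ) 1, s₀ + t • v ∈ K := fun t ht =>
    hKconv.add_smul_sub_mem hs₀ hs₁ ht
  have htrap := norm_trapezoid_le (p := fun t => f (s₀ + t • v))
    (p1 := fun t => fderiv ℝ f (s₀ + t • v) v)
    (p2 := fun t => fderiv ℝ (fderiv ℝ f) (s₀ + t • v) v v)
    (p3 := fun t => fderiv ℝ (fderiv ℝ (fderiv ℝ f)) (s₀ + t • v) v v v)
    (M := M * ‖v‖ ^ 3)
    (fun t ht => hasDerivAt_comp_line (d1 _ (hKV (hγ t ht))))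
    (fun t ht => hasDerivAt_eval (hasDerivAt_comp_line (d2 _ (hKV (hγ t ht)))) v)
    (fun t ht => hasDerivAt_eval
      (hasDerivAt_eval (hasDerivAt_comp_line (d3 _ (hKV (hγ t ht)))) v) v)
    (fun t ht => by
      have h3 := (hM3 _ (hγ t ht)).trans hMM3
      have e1 := ContinuousLinearMap.le_of_opNorm_le _ h3 v
      have e2 := ContinuousLinearMap.le_of_opNorm_le _ e1 v
      have e3 := ContinuousLinearMap.le_of_opNorm_le _ e2 v
      exact e3.trans_eq (by ring))
  have hend : s₀ + v = s₁ := by simp [hv]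
  simp only [one_smul, zero_smul, add_zero, hend] at htrap
  have key := abs_norm_sq_sub_le (ha s₀ hs₀) (ha s₁ hs₁) hd hab htrap
  rw [hinner]
  exact key.trans (by gcongr; linarith)
end
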